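/- The Schwarzschild data satisfy the vacuum Einstein equation ε_{a∘∘∘} R^{∘∘} ∧ e^∘ = 0: for every a ∈ {0,1,2,3} and all coordinate indices μ, ν, ρ ∈ {0,1,2,3}, Σ_{b1,b2,c} ε_{a b1 b2 c} ( R^{b1 b2}_{μν} E^c_ρ + R^{b1 b2}_{νρ} E^c_μ + R^{b1 b2}_{ρμ} E^c_ν ) = 0 on U. -/

import Mathlib

open scoped BigOperators

/-- Minkowski metric diag(1,-1,-1,-1) on index set {0,1,2,3}. -/
noncomputable def eta (a b : Fin 4) : ℝ :=
  if a = b then (if a = 0 then 1 else -1) else 0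

/-- Levi-Civita symbol ε_{abcd} on {0,1,2,3}. -/
noncomputable def eps (a b c d : Fin 4) : ℝ :=
  ∑ σ : Equiv.Perm (Fin 4),
    if ![a, b, c, d] = ⇑σ then ((Equiv.Perm.sign σ : ℤ) : ℝ) else 0

/-- Partial derivative in the μ-th coordinate direction of ℝ⁴. -/
noncomputable def pd (μ : Fin 4) (F : (Fin 4 → ℝ) → ℝ) (x : Fin 4 → ℝ) : ℝ :=
  fderiv ℝ F x (Pi.single μ 1)

/-- f(r) = √(1 − 2Gm/r); the coordinates are x = (t,r,θ,φ). -/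
noncomputable def fS (G m : ℝ) (x : Fin 4 → ℝ) : ℝ :=
  Real.sqrt (1 - 2 * G * m / x 1)

/-- The Schwarzschild chart U = {r > 2Gm, r > 0, 0 < θ < π}. -/
def Uchart (G m : ℝ) : Set (Fin 4 → ℝ) :=
  {x | 2 * G * m < x 1 ∧ 0 < x 1 ∧ 0 < x 2 ∧ x 2 < Real.pi}

/-- The Schwarzschild vierbein E^a_μ: E⁰_t = f, E¹_r = 1/f, E²_θ = r,
E³_φ = r sin θ, all other components zero. -/
noncomputable def Evb (G m : ℝ) (x : Fin 4 → ℝ) : Fin 4 → Fin 4 → ℝ :=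
  ![![fS G m x, 0, 0, 0],
    ![0, (fS G m x)⁻¹, 0, 0],
    ![0, 0, x 1, 0],
    ![0, 0, 0, x 1 * Real.sin (x 2)]]

/-- The Schwarzschild spin connection ω_μ^{ab}, antisymmetric in (a,b), with
nonzero components ω_t^{01} = −Gm/r², ω_θ^{12} = f, ω_φ^{13} = f sin θ,
ω_φ^{23} = cos θ (indexed as `sw G m x μ a b`). -/
noncomputable def sw (G m : ℝ) (x : Fin 4 → ℝ) : Fin 4 → Fin 4 → Fin 4 → ℝ :=
  ![![![0, -(G * m) / (x 1) ^ 2, 0, 0],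
     ![(G * m) / (x 1) ^ 2, 0, 0, 0],
     ![0, 0, 0, 0],
     ![0, 0, 0, 0]],
    ![![0, 0, 0, 0], ![0, 0, 0, 0], ![0, 0, 0, 0], ![0, 0, 0, 0]],
    ![![0, 0, 0, 0],
     ![0, 0, fS G m x, 0],
     ![0, -fS G m x, 0, 0],
     ![0, 0, 0, 0]],
    ![![0, 0, 0, 0],
     ![0, 0, 0, fS G m x * Real.sin (x 2)],
     ![0, 0, 0, Real.cos (x 2)],
     ![0, -(fS G m x * Real.sin (x 2)), -Real.cos (x 2), 0]]]

/-- The index-lowered spin connection ω_μ^a{}_c = Σ_b ω_μ^{ab} η_{bc}. -/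
noncomputable def swl (G m : ℝ) (x : Fin 4 → ℝ) (μ a c : Fin 4) : ℝ :=
  ∑ b : Fin 4, sw G m x μ a b * eta b c

/-- Torsion components T^a_{μν} of the Schwarzschild data. -/
noncomputable def Tor (G m : ℝ) (x : Fin 4 → ℝ) (a μ ν : Fin 4) : ℝ :=
  pd μ (fun y => Evb G m y a ν) x - pd ν (fun y => Evb G m y a μ) x
    + ∑ c : Fin 4, (swl G m x μ a c * Evb G m x c ν - swl G m x ν a c * Evb G m x c μ)

/-- Curvature components R^{ab}_{μν} of the Schwarzschild spin connection. -/
noncomputable def Rcurv (G m : ℝ) (x : Fin 4 → ℝ) (a b μ ν : Fin 4) : ℝ :=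
  pd μ (fun y => sw G m y ν a b) x - pd ν (fun y => sw G m y μ a b) x
    + ∑ c : Fin 4, (swl G m x μ a c * sw G m x ν c b - swl G m x ν a c * sw G m x μ c b)

/-!
In the orthonormal frame the curvature is diagonal, `R^{ab} = K_{ab} e^a ∧ e^b`, with `K` symmetric
and, after normalizing its diagonal to zero, with vanishing row sums: the metric is Ricci-flat.
Since `ε_{abcd} e^b ∧ e^c ∧ e^d` is invariant under rotation of `b, c, d`, the coefficient `K_{bc}`
in `∑ ε_{abcd} K_{bc} e^b ∧ e^c ∧ e^d` may be replaced by the mean of `K_{bc}, K_{cd}, K_{db}`. For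
distinct `a, b, c, d` the sum of these three is half of `Ric_b + Ric_c + Ric_d - Ric_a`, where `Ric`
denotes the row sums, hence zero.
-/

theorem eps_eq_det (a b c d : Fin 4) :
    eps a b c d = ((1 : Matrix (Fin 4) (Fin 4) ℝ).submatrix id ![a, b, c, d]).det := by
  rw [Matrix.det_apply', eps]
  refine Finset.sum_congr rfl fun σ _ => ?_
  simp only [Matrix.submatrix_apply, id_eq, Matrix.one_apply, Finset.prod_boole, Finset.mem_univ,
    true_imp_iff, mul_ite, mul_one, mul_zero, funext_iff, eq_comm]

theorem eps_rotate (a b c d : Fin 4) : eps a c d b = eps a b c d := by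
  let τ : Equiv.Perm (Fin 4) := c[1, 2, 3]
  have hτ : ![a, c, d, b] = ![a, b, c, d] ∘ τ := by
    ext i
    fin_cases i <;> rfl
  have hsign : Equiv.Perm.sign τ = 1 := by decide
  have hperm := Matrix.det_permute' τ ((1 : Matrix (Fin 4) (Fin 4) ℝ).submatrix id ![a, b, c, d])
  rw [Matrix.submatrix_submatrix, Function.comp_id, ← hτ, ← eps_eq_det, ← eps_eq_det, hsign]
    at hperm
  simpa using hperm

theorem bijective_of_eps_ne_zero {a b c d : Fin 4} (h : eps a b c d ≠ 0) :
    Function.Bijective ![a, b, c, d] := by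
  refine Finite.injective_iff_bijective.mp fun i j hij => ?_
  by_contra hne
  rw [eps_eq_det] at h
  exact h (Matrix.det_zero_of_column_eq hne fun k => congrArg ((1 : Matrix _ _ ℝ) k) hij)

/-- Components `(α ∧ β)_{ij}` of the wedge product of two one-forms given by their components. -/
def wedge {ι R : Type*} [CommRing R] (α β : ι → R) (i j : ι) : R :=
  α i * β j - α j * β i

section Wedge

variable {ι R : Type*} [CommRing R]

theorem wedge_self (α : ι → R) : wedge α α = 0 := by
  ext i j
  simp only [wedge, Pi.zero_apply]
  ring

theorem wedge_swap (α β : ι → R) : wedge β α = -wedge α β := by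
  ext i j
  simp only [wedge, Pi.neg_apply]
  ring

theorem wedge_add_left (α α' β : ι → R) : wedge (α + α') β = wedge α β + wedge α' β := by
  ext i j
  simp only [wedge, Pi.add_apply]
  ring

theorem wedge_smul_left (k : R) (α β : ι → R) : wedge (k • α) β = k • wedge α β := by
  ext i j
  simp only [wedge, Pi.smul_apply, smul_eq_mul]
  ring

theorem wedge_smul_right (k : R) (α β : ι → R) : wedge α (k • β) = k • wedge α β := by
  ext i j
  simp only [wedge, Pi.smul_apply, smul_eq_mul]
  ring

theorem wedge_neg_left (α β : ι → R) : wedge (-α) β = -wedge α β := by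
  rw [← neg_one_smul R α, wedge_smul_left, neg_one_smul]

theorem wedge_neg_right (α β : ι → R) : wedge α (-β) = -wedge α β := by
  rw [← neg_one_smul R β, wedge_smul_right, neg_one_smul]

theorem wedge_zero_left (β : ι → R) : wedge 0 β = 0 := by
  ext i j
  simp [wedge]

theorem wedge_zero_right (α : ι → R) : wedge α 0 = 0 := by
  ext i j
  simp [wedge]

end Wedge

theorem cyclic_add_eq_zero_of_sum_eq_zero {ι R : Type*} [Fintype ι] [CommRing R] [NoZeroDivisors R]
    [CharZero R] {K : ι → ι → R} (hsymm : ∀ i j, K i j = K j i) (hdiag : ∀ i, K i i = 0)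
    (hrow : ∀ i, ∑ j, K i j = 0) {a b c d : ι} (hbij : Function.Bijective ![a, b, c, d]) :
    K b c + K c d + K d b = 0 := by
  have row (i : ι) : K i a + K i b + K i c + K i d = 0 := by
    rw [← hrow i, ← hbij.sum_comp, Fin.sum_univ_four]
    rfl
  have twice : 2 * (K b c + K c d + K d b) = 0 := by
    linear_combination row b + row c + row d - row a + hsymm b c + hsymm c d + hsymm d b
      + hsymm a b + hsymm a c + hsymm a d + hdiag a - hdiag b - hdiag c - hdiag d
  exact (mul_eq_zero.mp twice).resolve_left two_ne_zero

theorem sum_rotate {ι M : Type*} [Fintype ι] [AddCommMonoid M] (F : ι → ι → ι → M) :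
    ∑ b, ∑ c, ∑ d, F c d b = ∑ b, ∑ c, ∑ d, F b c d := by
  rw [Finset.sum_comm]
  exact Finset.sum_congr rfl fun _ _ => Finset.sum_comm

theorem sum_eps_mul_wedge_cyclic_eq_zero {ι : Type*} {K : Fin 4 → Fin 4 → ℝ}
    (hsymm : ∀ b c, K b c = K c b) (hdiag : ∀ b, K b b = 0) (hrow : ∀ b, ∑ c, K b c = 0)
    (e : Fin 4 → ι → ℝ) (a : Fin 4) (μ ν ρ : ι) :
    ∑ b, ∑ c, ∑ d, eps a b c d *
      (K b c * wedge (e b) (e c) μ ν * e d ρ + K b c * wedge (e b) (e c) ν ρ * e d μ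
        + K b c * wedge (e b) (e c) ρ μ * e d ν) = 0 := by
  let V (b c d : Fin 4) : ℝ := eps a b c d *
    (wedge (e b) (e c) μ ν * e d ρ + wedge (e b) (e c) ν ρ * e d μ + wedge (e b) (e c) ρ μ * e d ν)
  have V_rotate (b c d : Fin 4) : V c d b = V b c d := by
    simp only [V, wedge, eps_rotate a b c d]
    ring
  have V_mul_cyclic (b c d : Fin 4) : V b c d * (K b c + K c d + K d b) = 0 := by
    by_cases h : eps a b c d = 0
    · simp only [V, h, zero_mul]
    · rw [cyclic_add_eq_zero_of_sum_eq_zero hsymm hdiag hrow (bijective_of_eps_ne_zero h), mul_zero]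
  have rotate_once : ∑ b, ∑ c, ∑ d, V b c d * K c d = ∑ b, ∑ c, ∑ d, V b c d * K b c := by
    rw [← sum_rotate fun b c d => V b c d * K b c]
    simp only [V_rotate]
  have rotate_twice : ∑ b, ∑ c, ∑ d, V b c d * K d b = ∑ b, ∑ c, ∑ d, V b c d * K b c := by
    rw [← rotate_once, ← sum_rotate fun b c d => V b c d * K c d]
    simp only [V_rotate]
  have thrice : 3 * ∑ b, ∑ c, ∑ d, V b c d * K b c = 0 := by
    calc 3 * ∑ b, ∑ c, ∑ d, V b c d * K b c
        = ∑ b, ∑ c, ∑ d, V b c d * (K b c + K c d + K d b) := by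
          simp only [mul_add, Finset.sum_add_distrib, rotate_once, rotate_twice]
          ring
      _ = 0 := by simp only [V_mul_cyclic, Finset.sum_const_zero]
  calc _ = ∑ b, ∑ c, ∑ d, V b c d * K b c := by
        refine Fintype.sum_congr _ _ fun b => Fintype.sum_congr _ _ fun c =>
          Fintype.sum_congr _ _ fun d => ?_
        simp only [V]
        ring
    _ = 0 := (mul_eq_zero.mp thrice).resolve_left three_ne_zero

/-- Components of the coordinate one-form `dx^i`. -/
noncomputable def coordForm (i : Fin 4) : Fin 4 → ℝ :=
  Pi.single i 1

/-- Components `(dh)_μ = ∂_μ h` of the differential of a function at a point. -/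
noncomputable def differential (h : (Fin 4 → ℝ) → ℝ) (x : Fin 4 → ℝ) : Fin 4 → ℝ :=
  fun μ => pd μ h x

/-- Components `(dα)_{μν} = ∂_μ α_ν - ∂_ν α_μ` of the exterior derivative of a one-form, given as
the field of its components. -/
noncomputable def exteriorDeriv (α : (Fin 4 → ℝ) → Fin 4 → ℝ) (x : Fin 4 → ℝ) (μ ν : Fin 4) : ℝ :=
  pd μ (fun y => α y ν) x - pd ν (fun y => α y μ) x

theorem differential_comp_coord {g : ℝ → ℝ} {g' : ℝ} {x : Fin 4 → ℝ} {i : Fin 4}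
    (hg : HasDerivAt g g' (x i)) : differential (fun y => g (y i)) x = g' • coordForm i := by
  ext μ
  have hfderiv : HasFDerivAt (fun y : Fin 4 → ℝ => g (y i)) (g' • ContinuousLinearMap.proj i) x :=
    hg.comp_hasFDerivAt x (ContinuousLinearMap.proj i : (Fin 4 → ℝ) →L[ℝ] ℝ).hasFDerivAt
  simp [differential, pd, hfderiv.fderiv, coordForm, Pi.single_apply, eq_comm]

theorem differential_mul {g h : (Fin 4 → ℝ) → ℝ} {x : Fin 4 → ℝ} (hg : DifferentiableAt ℝ g x)
    (hh : DifferentiableAt ℝ h x) :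
    differential (fun y => g y * h y) x = g x • differential h x + h x • differential g x := by
  ext μ
  simp [differential, pd, fderiv_fun_mul hg hh]

theorem exteriorDeriv_zero (x : Fin 4 → ℝ) : exteriorDeriv 0 x = 0 := by
  ext μ ν
  simp [exteriorDeriv, pd]

theorem exteriorDeriv_neg (α : (Fin 4 → ℝ) → Fin 4 → ℝ) (x : Fin 4 → ℝ) :
    exteriorDeriv (-α) x = -exteriorDeriv α x := by
  ext μ ν
  simp only [exteriorDeriv, pd, Pi.neg_apply, fderiv_fun_neg, neg_apply]
  ring

theorem exteriorDeriv_smul_coordForm (h : (Fin 4 → ℝ) → ℝ) (i : Fin 4) (x : Fin 4 → ℝ) :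
    exteriorDeriv (fun y => h y • coordForm i) x = wedge (differential h x) (coordForm i) := by
  have pd_mul_const (μ : Fin 4) (k : ℝ) : pd μ (fun y => h y * k) x = pd μ h x * k := by
    rw [pd, show (fun y => h y * k) = k • h from funext fun y => mul_comm _ _,
      fderiv_const_smul_field, mul_comm]
    rfl
  ext μ ν
  simp only [exteriorDeriv, Pi.smul_apply, smul_eq_mul, pd_mul_const, wedge, differential]

/-- The connection one-form `ω^{ab}`, as the field of its components. -/
noncomputable def spinForm (G m : ℝ) (a b : Fin 4) (x : Fin 4 → ℝ) : Fin 4 → ℝ :=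
  fun μ => sw G m x μ a b

/-- The coefficients `κ_{ab}` in `R^{ab} = (Gm/r³) κ_{ab} e^a ∧ e^b`. The diagonal, on which
`e^a ∧ e^a` vanishes, is set to zero so that the row sums are proportional to the diagonal entries
of the Ricci tensor. -/
def curvatureCoeff : Fin 4 → Fin 4 → ℝ :=
  ![![0, -2, 1, 1], ![-2, 0, 1, 1], ![1, 1, 0, -2], ![1, 1, -2, 0]]

theorem curvatureCoeff_symm (a b : Fin 4) : curvatureCoeff a b = curvatureCoeff b a := by
  fin_cases a <;> fin_cases b <;> rfl

theorem curvatureCoeff_self (a : Fin 4) : curvatureCoeff a a = 0 := by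
  fin_cases a <;> rfl

theorem sum_curvatureCoeff (a : Fin 4) : ∑ b, curvatureCoeff a b = 0 := by
  fin_cases a <;> simp [curvatureCoeff, Fin.sum_univ_succ] <;> norm_num

section Connection

variable (G m : ℝ) (x : Fin 4 → ℝ)

theorem spinForm_swap (a b : Fin 4) : spinForm G m b a = -spinForm G m a b := by
  ext y μ
  fin_cases μ <;> fin_cases a <;> fin_cases b <;> simp [spinForm, sw, neg_div]

theorem spinForm_self (a : Fin 4) : spinForm G m a a = 0 :=
  self_eq_neg.mp (spinForm_swap G m a a)

theorem spinForm_zero_one :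
    spinForm G m 0 1 = fun y => (-(G * m) / y 1 ^ 2) • coordForm 0 := by
  ext y μ
  fin_cases μ <;> simp [spinForm, sw, coordForm]

theorem spinForm_zero_two : spinForm G m 0 2 = 0 := by
  ext y μ
  fin_cases μ <;> rfl

theorem spinForm_zero_three : spinForm G m 0 3 = 0 := by
  ext y μ
  fin_cases μ <;> rfl

theorem spinForm_one_two : spinForm G m 1 2 = fun y => fS G m y • coordForm 2 := by
  ext y μ
  fin_cases μ <;> simp [spinForm, sw, coordForm]

theorem spinForm_one_three :
    spinForm G m 1 3 = fun y => (fS G m y * Real.sin (y 2)) • coordForm 3 := by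
  ext y μ
  fin_cases μ <;> simp [spinForm, sw, coordForm]

theorem spinForm_two_three : spinForm G m 2 3 = fun y => Real.cos (y 2) • coordForm 3 := by
  ext y μ
  fin_cases μ <;> simp [spinForm, sw, coordForm]

theorem Evb_zero : Evb G m x 0 = fS G m x • coordForm 0 := by
  ext μ
  fin_cases μ <;> simp [Evb, coordForm]

theorem Evb_one : Evb G m x 1 = (fS G m x)⁻¹ • coordForm 1 := by
  ext μ
  fin_cases μ <;> simp [Evb, coordForm]

theorem Evb_two : Evb G m x 2 = x 1 • coordForm 2 := by
  ext μ
  fin_cases μ <;> simp [Evb, coordForm]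

theorem Evb_three : Evb G m x 3 = (x 1 * Real.sin (x 2)) • coordForm 3 := by
  ext μ
  fin_cases μ <;> simp [Evb, coordForm]

theorem Rcurv_eq_exteriorDeriv_add_sum_wedge (a b : Fin 4) :
    Rcurv G m x a b = exteriorDeriv (spinForm G m a b) x +
      ∑ c, eta c c • wedge (spinForm G m a c x) (spinForm G m c b x) := by
  have swl_eq (μ a c : Fin 4) : swl G m x μ a c = sw G m x μ a c * eta c c := by
    simp [swl, eta]
  ext μ ν
  simp only [Rcurv, swl_eq, exteriorDeriv, spinForm, Pi.add_apply, Finset.sum_apply, Pi.smul_apply,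
    smul_eq_mul, wedge]
  congr 1
  exact Finset.sum_congr rfl fun c _ => by ring

theorem Rcurv_swap (a b : Fin 4) : Rcurv G m x b a = -Rcurv G m x a b := by
  simp only [Rcurv_eq_exteriorDeriv_add_sum_wedge, spinForm_swap G m a b, exteriorDeriv_neg,
    neg_add, ← Finset.sum_neg_distrib, ← smul_neg]
  congr 1
  refine Finset.sum_congr rfl fun c _ => ?_
  rw [← wedge_swap, spinForm_swap G m c b, spinForm_swap G m a c, Pi.neg_apply, Pi.neg_apply,
    wedge_neg_left, wedge_neg_right, neg_neg]

theorem Rcurv_self (a : Fin 4) : Rcurv G m x a a = 0 :=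
  self_eq_neg.mp (Rcurv_swap G m x a a)

end Connection

section Curvature

variable {G m : ℝ} {x : Fin 4 → ℝ}

theorem hasDerivAt_sqrt_one_sub_div {k r : ℝ} (hr : r ≠ 0) (hpos : 0 < 1 - k / r) :
    HasDerivAt (fun s => √(1 - k / s)) (k / (2 * r ^ 2 * √(1 - k / r))) r := by
  have hdiv : HasDerivAt (fun s => 1 - k / s) (k / r ^ 2) r := by
    simpa [div_eq_mul_inv] using ((hasDerivAt_inv hr).const_mul k).const_sub 1
  refine (hdiv.sqrt hpos.ne').congr_deriv ?_
  field_simp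

theorem differential_fS (hr : x 1 ≠ 0) (hpos : 0 < 1 - 2 * G * m / x 1) :
    differential (fS G m) x = (G * m / (x 1 ^ 2 * fS G m x)) • coordForm 1 := by
  refine differential_comp_coord ((hasDerivAt_sqrt_one_sub_div hr hpos).congr_deriv ?_)
  rw [fS]
  field_simp

theorem differentiableAt_fS (hr : x 1 ≠ 0) (hpos : 0 < 1 - 2 * G * m / x 1) :
    DifferentiableAt ℝ (fS G m) x :=
  (hasDerivAt_sqrt_one_sub_div hr hpos).differentiableAt.comp (f := fun y : Fin 4 → ℝ => y 1) x
    (differentiableAt_apply 1 x)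

theorem differential_fS_mul_sin (hr : x 1 ≠ 0) (hpos : 0 < 1 - 2 * G * m / x 1) :
    differential (fun y => fS G m y * Real.sin (y 2)) x =
      (fS G m x * Real.cos (x 2)) • coordForm 2 +
        (Real.sin (x 2) * (G * m / (x 1 ^ 2 * fS G m x))) • coordForm 1 := by
  rw [differential_mul (differentiableAt_fS hr hpos) (by fun_prop), differential_fS hr hpos,
    differential_comp_coord (Real.hasDerivAt_sin (x 2)), smul_smul, smul_smul]

theorem differential_div_sq (hr : x 1 ≠ 0) (k : ℝ) :
    differential (fun y => k / y 1 ^ 2) x = (-2 * k / x 1 ^ 3) • coordForm 1 := by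
  refine differential_comp_coord (g := fun r => k / r ^ 2) ?_
  refine ((hasDerivAt_const (x 1) k).div (hasDerivAt_pow 2 (x 1)) (pow_ne_zero 2 hr)).congr_deriv ?_
  field_simp
  ring

theorem Rcurv_zero_one (hr : x 1 ≠ 0) (hf : fS G m x ≠ 0) :
    Rcurv G m x 0 1 = (G * m / x 1 ^ 3 * -2) • wedge (Evb G m x 0) (Evb G m x 1) := by
  have structure_eq : Rcurv G m x 0 1 = exteriorDeriv (spinForm G m 0 1) x := by
    simp [Rcurv_eq_exteriorDeriv_add_sum_wedge, Fin.sum_univ_four, spinForm_self, spinForm_zero_two,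
      spinForm_zero_three, wedge_zero_left, wedge_zero_right]
  rw [structure_eq, spinForm_zero_one, exteriorDeriv_smul_coordForm, differential_div_sq hr,
    Evb_zero, Evb_one, wedge_smul_left, wedge_smul_left, wedge_smul_right, wedge_swap (coordForm 0)]
  match_scalars
  field_simp

theorem Rcurv_zero_two (hr : x 1 ≠ 0) :
    Rcurv G m x 0 2 = (G * m / x 1 ^ 3) • wedge (Evb G m x 0) (Evb G m x 2) := by
  have structure_eq :
      Rcurv G m x 0 2 = -wedge (spinForm G m 0 1 x) (spinForm G m 1 2 x) := by
    simp [Rcurv_eq_exteriorDeriv_add_sum_wedge, Fin.sum_univ_four, spinForm_self, spinForm_zero_two,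
      spinForm_zero_three, wedge_zero_left, wedge_zero_right, exteriorDeriv_zero, eta]
  rw [structure_eq, spinForm_zero_one, spinForm_one_two, Evb_zero, Evb_two]
  simp only [wedge_smul_left, wedge_smul_right]
  match_scalars
  field_simp

theorem Rcurv_zero_three (hr : x 1 ≠ 0) :
    Rcurv G m x 0 3 = (G * m / x 1 ^ 3) • wedge (Evb G m x 0) (Evb G m x 3) := by
  have structure_eq :
      Rcurv G m x 0 3 = -wedge (spinForm G m 0 1 x) (spinForm G m 1 3 x) := by
    simp [Rcurv_eq_exteriorDeriv_add_sum_wedge, Fin.sum_univ_four, spinForm_self, spinForm_zero_two,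
      spinForm_zero_three, wedge_zero_left, wedge_zero_right, exteriorDeriv_zero, eta]
  rw [structure_eq, spinForm_zero_one, spinForm_one_three, Evb_zero, Evb_three]
  simp only [wedge_smul_left, wedge_smul_right]
  match_scalars
  field_simp

theorem Rcurv_one_two (hr : x 1 ≠ 0) (hpos : 0 < 1 - 2 * G * m / x 1) :
    Rcurv G m x 1 2 = (G * m / x 1 ^ 3) • wedge (Evb G m x 1) (Evb G m x 2) := by
  have structure_eq : Rcurv G m x 1 2 = exteriorDeriv (spinForm G m 1 2) x +
      wedge (spinForm G m 1 3 x) (spinForm G m 2 3 x) := by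
    simp [Rcurv_eq_exteriorDeriv_add_sum_wedge, Fin.sum_univ_four, spinForm_self, spinForm_zero_two,
      wedge_zero_left, wedge_zero_right, spinForm_swap G m 2 3, eta, wedge_neg_right]
  rw [structure_eq, spinForm_one_two, spinForm_one_three, spinForm_two_three,
    exteriorDeriv_smul_coordForm, differential_fS hr hpos, Evb_one, Evb_two]
  simp only [wedge_smul_left, wedge_smul_right, wedge_self]
  match_scalars
  field_simp

theorem Rcurv_one_three (hr : x 1 ≠ 0) (hpos : 0 < 1 - 2 * G * m / x 1) :
    Rcurv G m x 1 3 = (G * m / x 1 ^ 3) • wedge (Evb G m x 1) (Evb G m x 3) := by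
  have structure_eq : Rcurv G m x 1 3 = exteriorDeriv (spinForm G m 1 3) x -
      wedge (spinForm G m 1 2 x) (spinForm G m 2 3 x) := by
    simp [Rcurv_eq_exteriorDeriv_add_sum_wedge, Fin.sum_univ_four, spinForm_self,
      spinForm_zero_three, wedge_zero_left, wedge_zero_right, eta, sub_eq_add_neg]
  rw [structure_eq, spinForm_one_two, spinForm_one_three, spinForm_two_three,
    exteriorDeriv_smul_coordForm, differential_fS_mul_sin hr hpos, Evb_one, Evb_three]
  simp only [wedge_add_left, wedge_smul_left, wedge_smul_right]
  match_scalars <;> field_simp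
  ring

theorem Rcurv_two_three (hr : x 1 ≠ 0) (hpos : 0 < 1 - 2 * G * m / x 1) :
    Rcurv G m x 2 3 = (G * m / x 1 ^ 3 * -2) • wedge (Evb G m x 2) (Evb G m x 3) := by
  have structure_eq : Rcurv G m x 2 3 = exteriorDeriv (spinForm G m 2 3) x +
      wedge (spinForm G m 1 2 x) (spinForm G m 1 3 x) := by
    simp [Rcurv_eq_exteriorDeriv_add_sum_wedge, Fin.sum_univ_four, spinForm_self,
      spinForm_zero_three, wedge_zero_left, wedge_zero_right, spinForm_swap G m 1 2, eta,
      wedge_neg_left]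
  have fS_sq : fS G m x ^ 2 = 1 - 2 * G * m / x 1 := Real.sq_sqrt hpos.le
  rw [structure_eq, spinForm_one_two, spinForm_one_three, spinForm_two_three,
    exteriorDeriv_smul_coordForm, differential_comp_coord (Real.hasDerivAt_cos (x 2)), Evb_two,
    Evb_three]
  simp only [wedge_smul_left, wedge_smul_right]
  match_scalars
  calc _ = (fS G m x ^ 2 - 1) * Real.sin (x 2) := by ring
    _ = _ := by
      rw [fS_sq]
      field_simp
      ring

theorem Rcurv_eq_smul_wedge (hr : x 1 ≠ 0) (hpos : 0 < 1 - 2 * G * m / x 1) (a b : Fin 4) :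
    Rcurv G m x a b =
      (G * m / x 1 ^ 3 * curvatureCoeff a b) • wedge (Evb G m x a) (Evb G m x b) := by
  have hf : fS G m x ≠ 0 := (Real.sqrt_pos.mpr hpos).ne'
  have of_lt (a b : Fin 4) (hab : a < b) : Rcurv G m x a b =
      (G * m / x 1 ^ 3 * curvatureCoeff a b) • wedge (Evb G m x a) (Evb G m x b) := by
    fin_cases a <;> fin_cases b <;> simp_all [curvatureCoeff, Rcurv_zero_one, Rcurv_zero_two,
      Rcurv_zero_three, Rcurv_one_two, Rcurv_one_three, Rcurv_two_three]
  rcases lt_trichotomy a b with hab | rfl | hba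
  · exact of_lt a b hab
  · rw [Rcurv_self, wedge_self, smul_zero]
  · rw [Rcurv_swap, of_lt b a hba, wedge_swap (Evb G m x b), curvatureCoeff_symm a b, smul_neg]

end Curvature

theorem schwarzschild_vacuum_einstein_general {G m : ℝ} {x : Fin 4 → ℝ} (hr : x 1 ≠ 0)
    (hpos : 0 < 1 - 2 * G * m / x 1) (a μ ν ρ : Fin 4) :
    ∑ b1 : Fin 4, ∑ b2 : Fin 4, ∑ c : Fin 4,
      eps a b1 b2 c *
        (Rcurv G m x b1 b2 μ ν * Evb G m x c ρ
          + Rcurv G m x b1 b2 ν ρ * Evb G m x c μ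
          + Rcurv G m x b1 b2 ρ μ * Evb G m x c ν) = 0 := by
  simp only [Rcurv_eq_smul_wedge hr hpos, Pi.smul_apply, smul_eq_mul]
  refine sum_eps_mul_wedge_cyclic_eq_zero (fun b c => ?_) (fun b => ?_) (fun b => ?_) _ a μ ν ρ
  · rw [curvatureCoeff_symm]
  · rw [curvatureCoeff_self, mul_zero]
  · rw [← Finset.mul_sum, sum_curvatureCoeff, mul_zero]

/-- the Schwarzschild data satisfy the vacuum Einstein equation
ε_{a∘∘∘} R^{∘∘} ∧ e^∘ = 0 in components. -/
theorem schwarzschild_vacuum_einstein (G m : ℝ) (hG : 0 < G) (hm : 0 ≤ m)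
    (x : Fin 4 → ℝ) (hx : x ∈ Uchart G m) (a μ ν ρ : Fin 4) :
    ∑ b1 : Fin 4, ∑ b2 : Fin 4, ∑ c : Fin 4,
      eps a b1 b2 c *
        (Rcurv G m x b1 b2 μ ν * Evb G m x c ρ
          + Rcurv G m x b1 b2 ν ρ * Evb G m x c μ
          + Rcurv G m x b1 b2 ρ μ * Evb G m x c ν) = 0 :=
  schwarzschild_vacuum_einstein_general hx.2.1.ne' (sub_pos.mpr ((div_lt_one hx.2.1).mpr hx.1))
    a μ ν ρ
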